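/- arXiv:2012.00311 — 2 statements merged into one kernel-verified Lean document; each statement's English description precedes it below -/
import Mathlib

section
/- For every positive integer q there exists a tree on n = 5q + 6 vertices that admits a feasible agency without parking with time horizon T = 2n − 2 = 10q + 10 and k = 2q + 2 = T/5 agents; in particular there are arbitrarily large trees with a feasible agency without parking such that T = 2n − 2 and k = T/5. -/
open SimpleGraph

/-- A walk with parking of time horizon `T` that visits every vertex and returns
to its starting vertex: a (traveling salesman) tour. -/
def AgencyTour {V : Type*} (G : SimpleGraph V) (T : ℕ) (a : ℕ → V) : Prop :=
  (∀ t < T, a t = a (t + 1) ∨ G.Adj (a t) (a (t + 1))) ∧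
  (∀ v : V, ∃ t ≤ T, a t = v) ∧
  a 0 = a T

/-- A feasible agency with `k` agents and time horizon `T`: each agent performs a
tour (with parking), and no two distinct agents crash in a node or in an edge. -/
def FeasibleAgency {V : Type*} (G : SimpleGraph V) (k T : ℕ) (a : Fin k → ℕ → V) : Prop :=
  (∀ i, AgencyTour G T (a i)) ∧
  ∀ i j : Fin k, i ≠ j →
    (∀ t ≤ T, a i t ≠ a j t) ∧
    (∀ t < T, ¬(a i t = a j (t + 1) ∧ a i (t + 1) = a j t ∧ a i t ≠ a i (t + 1)))

/-- A walk without parking of time horizon `T` that visits every vertex and returns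
to its starting vertex: a tour without parking. -/
def AgencyTourNP {V : Type*} (G : SimpleGraph V) (T : ℕ) (a : ℕ → V) : Prop :=
  (∀ t < T, G.Adj (a t) (a (t + 1))) ∧
  (∀ v : V, ∃ t ≤ T, a t = v) ∧
  a 0 = a T

/-- A feasible agency without parking with `k` agents and time horizon `T`. -/
def FeasibleAgencyNP {V : Type*} (G : SimpleGraph V) (k T : ℕ) (a : Fin k → ℕ → V) : Prop :=
  (∀ i, AgencyTourNP G T (a i)) ∧
  ∀ i j : Fin k, i ≠ j →
    (∀ t ≤ T, a i t ≠ a j t) ∧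
    (∀ t < T, ¬(a i t = a j (t + 1) ∧ a i (t + 1) = a j t ∧ a i t ≠ a i (t + 1)))

/-
If all agents follow one closed walk periodically, with delays that are multiples of `m`, then
nobody crashes as soon as any two visits to the same vertex, and any two opposite traversals of the
same edge, take place at times that are incongruent modulo `m`. A closed walk of length `m * k`
thus carries `k` agents.

Take `m = 5` and the tour of a tree in which every edge is traversed exactly once in each
direction; its length is `2 * n - 2`. Hang a tree below the root of another one and tour it last.
The new tour satisfies the condition if the old ones do even when their final return to the root
counts as a visit, and if the length of the tour below is not `-1` modulo `5`, so that the two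
crossings of the new edge do not collide. The star with three leaves has a tour of length `6`, and
visits its center at times `0, 2, 4, 6`. Along a path with a star hung from each vertex, a tour
that runs to the far end first and visits the stars on its way back reaches a vertex of the path
when entering it, coming back from below, and coming back from the star. If the subtree below has a
tour of length `1` modulo `5`, these times are `0, 3, 1` modulo `5`, and the tour of the whole again
has length `1` modulo `5`, so the construction can be repeated. Prolonging the path by two more
vertices makes the length of the tour a multiple of `5`.
-/

section

variable {V W : Type*} {G : SimpleGraph V} {H : SimpleGraph W}

section DisjointSum

theorem mem_range_inl_of_mem_support_sum {v : V} {x y : V ⊕ W} (p : (G ⊕g H).Walk (.inl v) x)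
    (hy : y ∈ p.support) : y ∈ Set.range (Sum.inl : V → V ⊕ W) := by
  classical
  rcases y with u | w
  · exact ⟨u, rfl⟩
  · exact absurd ⟨p.takeUntil _ hy⟩ (not_reachable_sum_inl_inr v w)

theorem not_isCycle_sum_inl (hG : G.IsAcyclic) {v : V} (c : (G ⊕g H).Walk (.inl v) (.inl v)) :
    ¬c.IsCycle := by
  have hmem : ∀ y ∈ c.support, y ∈ Set.range (Embedding.sumInl : G ↪g G ⊕g H) :=
    fun _ ↦ mem_range_inl_of_mem_support_sum c
  intro hc
  rw [← c.map_induce hmem] at hc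
  exact Embedding.sumInl.isoInduceRange.isAcyclic_iff.1 hG _ hc.of_map

theorem isAcyclic_sum (hG : G.IsAcyclic) (hH : H.IsAcyclic) : (G ⊕g H).IsAcyclic := by
  rintro (v | w) c hc
  · exact not_isCycle_sum_inl hG c hc
  · exact not_isCycle_sum_inl hH (c.map Iso.sumComm.toHom)
      (hc.map Iso.sumComm.injective)

theorem isTree_sum_sup_edge (hG : G.IsTree) (hH : H.IsTree) (v : V) (w : W) :
    ((G ⊕g H) ⊔ edge (.inl v) (.inr w)).IsTree where
  connected := hG.connected.sum_sup_edge hH.connected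
  isAcyclic := (isAcyclic_sum hG.isAcyclic hH.isAcyclic).sup_edge_of_not_reachable
    (not_reachable_sum_inl_inr v w)

end DisjointSum

section MapWalk

variable {u v : V}

/-- The image of a walk under a map preserving adjacency. Unlike for `Walk.map`, the endpoints of
the image are `f u` and `f v` syntactically. -/
def mapWalk (f : V → W) (hf : ∀ a b, G.Adj a b → H.Adj (f a) (f b)) (p : G.Walk u v) :
    H.Walk (f u) (f v) :=
  p.map ⟨f, @hf⟩

theorem length_mapWalk (f : V → W) (hf : ∀ a b, G.Adj a b → H.Adj (f a) (f b)) (p : G.Walk u v) :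
    (mapWalk f hf p).length = p.length :=
  p.length_map _

theorem getVert_mapWalk (f : V → W) (hf : ∀ a b, G.Adj a b → H.Adj (f a) (f b)) (p : G.Walk u v)
    (i : ℕ) : (mapWalk f hf p).getVert i = f (p.getVert i) :=
  p.getVert_map _ i

end MapWalk

section Spacing

variable {m k : ℕ} {r : V} {p : G.Walk r r}

/-- A closed walk is `m`-spaced if two walkers following it periodically, one of them delayed by
a multiple of `m`, crash neither in a node nor in an edge. The return to the base point at time
`p.length` is not counted as a visit, being time `0` of the next period. -/
structure IsSpaced (m : ℕ) (p : G.Walk r r) : Prop where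
  getVert_inj : ∀ i < p.length, ∀ j < p.length, i ≡ j [MOD m] → p.getVert i = p.getVert j → i = j
  not_swap : ∀ i < p.length, ∀ j < p.length, i ≡ j [MOD m] → p.getVert i = p.getVert (j + 1) →
    p.getVert (i + 1) ≠ p.getVert j

/-- The agents that follow the closed walk `p` periodically, agent `i` being `m * i` steps ahead
of agent `0`. -/
def delayedAgents (m k : ℕ) (p : G.Walk r r) (i : Fin k) (t : ℕ) : V :=
  p.getVert ((t + m * i) % p.length)

theorem getVert_add_one_mod_length (p : G.Walk r r) (t : ℕ) :
    p.getVert ((t + 1) % p.length) = p.getVert (t % p.length + 1) := by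
  rcases p.length.eq_zero_or_pos with h0 | hpos
  · rw [h0, Nat.mod_zero, Nat.mod_zero]
  have hlt : t % p.length < p.length := Nat.mod_lt _ hpos
  rw [← Nat.mod_add_mod]
  rcases (Nat.succ_le_of_lt hlt).eq_or_lt with heq | hlt'
  · rw [← Nat.succ_eq_add_one, heq, Nat.mod_self, p.getVert_zero, p.getVert_length]
  · rw [Nat.mod_eq_of_lt hlt']

theorem delayedAgents_add_one (i : Fin k) (t : ℕ) :
    delayedAgents m k p i (t + 1) = p.getVert ((t + m * i) % p.length + 1) := by
  rw [← getVert_add_one_mod_length, delayedAgents, add_right_comm]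

theorem exists_getVert_eq_of_lt_length (hpos : 0 < p.length) {v : V} (hv : v ∈ p.support) :
    ∃ x < p.length, p.getVert x = v := by
  obtain ⟨x, rfl, hx⟩ := Walk.mem_support_iff_exists_getVert.1 hv
  rcases hx.lt_or_eq with hlt | rfl
  · exact ⟨x, hlt, rfl⟩
  · exact ⟨0, hpos, by rw [p.getVert_zero, p.getVert_length]⟩

theorem exists_le_add_mod_eq {s x T : ℕ} (hs : s ≤ T) (hx : x < T) : ∃ t ≤ T, (t + s) % T = x := by
  refine ⟨(x + (T - s)) % T, (Nat.mod_lt _ (by omega)).le, ?_⟩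
  rw [Nat.mod_add_mod, add_assoc, Nat.sub_add_cancel hs, Nat.add_mod_right, Nat.mod_eq_of_lt hx]

theorem agencyTourNP_delayedAgents (hpos : 0 < p.length) (hp : ∀ v, v ∈ p.support) {i : Fin k}
    (hi : m * i ≤ p.length) : AgencyTourNP G p.length (delayedAgents m k p i) := by
  refine ⟨fun t _ ↦ ?_, fun v ↦ ?_, ?_⟩
  · rw [delayedAgents_add_one]
    exact p.adj_getVert_succ (Nat.mod_lt _ hpos)
  · obtain ⟨x, hx, rfl⟩ := exists_getVert_eq_of_lt_length hpos (hp v)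
    obtain ⟨t, ht, rfl⟩ := exists_le_add_mod_eq hi hx
    exact ⟨t, ht, rfl⟩
  · rw [delayedAgents, delayedAgents, Nat.zero_add, Nat.add_mod_left]

theorem feasibleAgencyNP_delayedAgents (hm : 0 < m) (hlen : p.length = m * k) (hp : IsSpaced m p)
    (hsupp : ∀ v, v ∈ p.support) : FeasibleAgencyNP G k p.length (delayedAgents m k p) := by
  have hdelay (i : Fin k) : m * i < p.length := hlen ▸ Nat.mul_lt_mul_of_pos_left i.2 hm
  have hlt (i : Fin k) (t : ℕ) : (t + m * i) % p.length < p.length :=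
    Nat.mod_lt _ (Nat.zero_lt_of_lt (hdelay i))
  have hmod (i j : Fin k) (t : ℕ) :
      (t + m * i) % p.length ≡ (t + m * j) % p.length [MOD m] := by
    simp [hlen, Nat.ModEq]
  refine ⟨fun i ↦ agencyTourNP_delayedAgents (Nat.zero_lt_of_lt (hdelay i)) hsupp (hdelay i).le,
    fun i j hij ↦ ⟨fun t _ hcrash ↦ ?_, fun t _ ⟨hfwd, hbwd, _⟩ ↦ ?_⟩⟩
  · have hpos : t + m * i ≡ t + m * j [MOD p.length] :=
      hp.getVert_inj _ (hlt i t) _ (hlt j t) (hmod i j t) hcrash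
    have heq : m * (i : ℕ) = m * j :=
      (Nat.ModEq.add_left_cancel' t hpos).eq_of_lt_of_lt (hdelay i) (hdelay j)
    exact hij (Fin.ext (Nat.eq_of_mul_eq_mul_left hm heq))
  · rw [delayedAgents_add_one] at hfwd hbwd
    exact hp.not_swap _ (hlt i t) _ (hlt j t) (hmod i j t) hfwd hbwd

end Spacing

theorem FeasibleAgencyNP.map_iso {k T : ℕ} {a : Fin k → ℕ → V} (ha : FeasibleAgencyNP G k T a)
    (φ : G ≃g H) : FeasibleAgencyNP H k T fun i t ↦ φ (a i t) := by
  refine ⟨fun i ↦ ⟨fun t ht ↦ φ.map_adj_iff.2 ((ha.1 i).1 t ht), fun v ↦ ?_,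
    congrArg φ (ha.1 i).2.2⟩, fun i j hij ↦ ?_⟩
  · obtain ⟨t, ht, hv⟩ := (ha.1 i).2.1 (φ.symm v)
    exact ⟨t, ht, φ.eq_symm_apply.1 hv⟩
  · simpa only [ne_eq, φ.injective.eq_iff] using ha.2 i j hij

section Graft

variable {m : ℕ} {r : V} {s : W} {p : G.Walk r r} {q : H.Walk s s}

/-- The times at which the closed walk `p` is at its base point, its final return excluded. -/
def rootVisits (p : G.Walk r r) : Set ℕ :=
  {t | t < p.length ∧ p.getVert t = r}

/-- The final return of `p` to its base point happens at a time not congruent modulo `m` to an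
earlier visit there, so that `p` may be extended by another excursion. -/
def HasFreshReturn (m : ℕ) (p : G.Walk r r) : Prop :=
  ∀ t ∈ rootVisits p, ¬t ≡ p.length [MOD m]

/-- The closed walk that follows `p`, crosses a new edge from `r` to `s`, follows `q`, and crosses
the new edge back. -/
def graftTour (p : G.Walk r r) (q : H.Walk s s) :
    ((G ⊕g H) ⊔ edge (.inl r) (.inr s)).Walk (.inl r) (.inl r) :=
  have hadj : ((G ⊕g H) ⊔ edge (.inl r) (.inr s)).Adj (.inl r) (.inr s) := by simp [edge_adj]
  (mapWalk Sum.inl (fun _ _ h ↦ by simpa using .inl h) p).append <| .cons hadj <|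
    (mapWalk Sum.inr (fun _ _ h ↦ by simpa using .inl h) q).append hadj.symm.toWalk

theorem length_graftTour (p : G.Walk r r) (q : H.Walk s s) :
    (graftTour p q).length = p.length + (q.length + 2) := by
  simp [graftTour, length_mapWalk]

theorem getVert_graftTour_of_le {i : ℕ} (hi : i ≤ p.length) :
    (graftTour p q).getVert i = .inl (p.getVert i) := by
  simp [graftTour, Walk.getVert_append', length_mapWalk, getVert_mapWalk, hi]

theorem getVert_graftTour_add {i : ℕ} (hi : i ≤ q.length) :
    (graftTour p q).getVert (p.length + 1 + i) = .inr (q.getVert i) := by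
  have hsub : p.length + 1 + i - p.length = i + 1 := by omega
  have hlt : ¬p.length + 1 + i ≤ p.length := by omega
  simp [graftTour, Walk.getVert_append', length_mapWalk, getVert_mapWalk, hsub, hi, hlt]

theorem mem_support_graftTour (hp : ∀ v, v ∈ p.support) (hq : ∀ w, w ∈ q.support) (x : V ⊕ W) :
    x ∈ (graftTour p q).support := by
  rcases x with v | w
  · obtain ⟨i, rfl, hi⟩ := Walk.mem_support_iff_exists_getVert.1 (hp v)
    exact getVert_graftTour_of_le (q := q) hi ▸ Walk.getVert_mem_support _ _
  · obtain ⟨i, rfl, hi⟩ := Walk.mem_support_iff_exists_getVert.1 (hq w)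
    exact getVert_graftTour_add (p := p) hi ▸ Walk.getVert_mem_support _ _

theorem rootVisits_graftTour (p : G.Walk r r) (q : H.Walk s s) :
    rootVisits (graftTour p q) = insert p.length (rootVisits p) := by
  ext t
  rw [rootVisits, Set.mem_ofPred_eq, length_graftTour, Set.mem_insert_iff, rootVisits,
    Set.mem_ofPred_eq]
  rcases le_or_gt t p.length with hle | hgt
  · rw [getVert_graftTour_of_le hle, Sum.inl.injEq]
    grind [Walk.getVert_length]
  · obtain ⟨i, rfl⟩ := Nat.exists_eq_add_of_le hgt
    have hr : ¬(p.length + 1 + i < p.length + (q.length + 2) ∧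
        (graftTour p q).getVert (p.length + 1 + i) = .inl r) := by
      rintro ⟨hlt, hv⟩
      rw [getVert_graftTour_add (by omega)] at hv
      exact Sum.inr_ne_inl hv
    have hnot : ¬(p.length + 1 + i < p.length ∧ p.getVert (p.length + 1 + i) = r) := by omega
    have hne : p.length + 1 + i ≠ p.length := by omega
    tauto

theorem graftTour_step_cases {i : ℕ} (hi : i < (graftTour p q).length) :
    (i < p.length ∧ (graftTour p q).getVert i = .inl (p.getVert i) ∧
      (graftTour p q).getVert (i + 1) = .inl (p.getVert (i + 1))) ∨
    (i = p.length ∧ (graftTour p q).getVert i = .inl r ∧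
      (graftTour p q).getVert (i + 1) = .inr s) ∨
    (∃ i' < q.length, i = p.length + 1 + i' ∧ (graftTour p q).getVert i = .inr (q.getVert i') ∧
      (graftTour p q).getVert (i + 1) = .inr (q.getVert (i' + 1))) ∨
    (i = p.length + 1 + q.length ∧ (graftTour p q).getVert i = .inr s ∧
      (graftTour p q).getVert (i + 1) = .inl r) := by
  rw [length_graftTour] at hi
  rcases lt_trichotomy i p.length with hlt | rfl | hgt
  · exact .inl ⟨hlt, getVert_graftTour_of_le hlt.le, getVert_graftTour_of_le hlt⟩
  · refine .inr (.inl ⟨rfl, ?_, ?_⟩)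
    · rw [getVert_graftTour_of_le le_rfl, p.getVert_length]
    · rw [← add_zero (p.length + 1), getVert_graftTour_add (Nat.zero_le _), q.getVert_zero]
  · obtain ⟨i, rfl⟩ := Nat.exists_eq_add_of_le hgt
    rcases (show i ≤ q.length by omega).lt_or_eq with hlt | rfl
    · exact .inr (.inr (.inl ⟨i, hlt, rfl, getVert_graftTour_add hlt.le,
        getVert_graftTour_add hlt⟩))
    · refine .inr (.inr (.inr ⟨rfl, ?_, ?_⟩))
      · rw [getVert_graftTour_add le_rfl, q.getVert_length]
      · rw [show p.length + 1 + q.length + 1 = (graftTour p q).length by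
          rw [length_graftTour]; omega, Walk.getVert_length]

theorem IsSpaced.eq_of_getVert_eq (hp : IsSpaced m p) (hr : HasFreshReturn m p) {i j : ℕ}
    (hi : i ≤ p.length) (hj : j ≤ p.length) (hij : i ≡ j [MOD m])
    (h : p.getVert i = p.getVert j) : i = j := by
  rcases hi.lt_or_eq with hi | rfl <;> rcases hj.lt_or_eq with hj | rfl
  · exact hp.getVert_inj i hi j hj hij h
  · exact absurd hij (hr i ⟨hi, by rw [h, p.getVert_length]⟩)
  · exact absurd hij.symm (hr j ⟨hj, by rw [← h, p.getVert_length]⟩)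
  · rfl

theorem IsSpaced.getVert_inj_graftTour (hp : IsSpaced m p) (hpr : HasFreshReturn m p)
    (hq : IsSpaced m q) (hqr : HasFreshReturn m q) {i j : ℕ} (hi : i < (graftTour p q).length)
    (hj : j < (graftTour p q).length) (hij : i ≡ j [MOD m])
    (h : (graftTour p q).getVert i = (graftTour p q).getVert j) : i = j := by
  rw [length_graftTour] at hi hj
  rcases le_or_gt i p.length with hip | hip <;> rcases le_or_gt j p.length with hjp | hjp
  · rw [getVert_graftTour_of_le hip, getVert_graftTour_of_le hjp] at h
    exact hp.eq_of_getVert_eq hpr hip hjp hij (Sum.inl_injective h)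
  · obtain ⟨j, rfl⟩ := Nat.exists_eq_add_of_le hjp
    rw [getVert_graftTour_of_le hip, getVert_graftTour_add (by omega)] at h
    exact absurd h Sum.inl_ne_inr
  · obtain ⟨i, rfl⟩ := Nat.exists_eq_add_of_le hip
    rw [getVert_graftTour_of_le hjp, getVert_graftTour_add (by omega)] at h
    exact absurd h Sum.inr_ne_inl
  · obtain ⟨i, rfl⟩ := Nat.exists_eq_add_of_le hip
    obtain ⟨j, rfl⟩ := Nat.exists_eq_add_of_le hjp
    rw [getVert_graftTour_add (by omega), getVert_graftTour_add (by omega)] at h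
    rw [hq.eq_of_getVert_eq hqr (by omega) (by omega) (hij.add_left_cancel' _)
      (Sum.inr_injective h)]

theorem IsSpaced.not_swap_graftTour (hp : IsSpaced m p) (hq : IsSpaced m q)
    (hm : ¬m ∣ q.length + 1) {i j : ℕ} (hi : i < (graftTour p q).length)
    (hj : j < (graftTour p q).length) (hij : i ≡ j [MOD m])
    (hfwd : (graftTour p q).getVert i = (graftTour p q).getVert (j + 1)) :
    (graftTour p q).getVert (i + 1) ≠ (graftTour p q).getVert j := by
  have hbridge : ¬p.length ≡ p.length + 1 + q.length [MOD m] := by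
    rwa [add_assoc, add_comm 1, Nat.left_modEq_add_iff]
  intro hbwd
  rcases graftTour_step_cases hi with ⟨hi, hi₀, hi₁⟩ | ⟨rfl, hi₀, hi₁⟩ | ⟨i, hi', rfl, hi₀, hi₁⟩ |
      ⟨rfl, hi₀, hi₁⟩ <;>
    rcases graftTour_step_cases hj with ⟨hj, hj₀, hj₁⟩ | ⟨rfl, hj₀, hj₁⟩ | ⟨j, hj', rfl, hj₀, hj₁⟩ |
      ⟨rfl, hj₀, hj₁⟩ <;>
    rw [hi₀, hj₁] at hfwd <;> rw [hi₁, hj₀] at hbwd <;>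
    simp only [Sum.inl.injEq, Sum.inr.injEq, reduceCtorEq] at hfwd hbwd
  · exact hp.not_swap i hi j hj hij hfwd hbwd
  · exact hbridge hij
  · exact hq.not_swap i hi' j hj' (hij.add_left_cancel' _) hfwd hbwd
  · exact hbridge hij.symm

theorem isSpaced_nil : IsSpaced m (Walk.nil : G.Walk r r) :=
  ⟨by simp, by simp⟩

theorem isSpaced_graftTour (hp : IsSpaced m p) (hpr : HasFreshReturn m p) (hq : IsSpaced m q)
    (hqr : HasFreshReturn m q) (hm : ¬m ∣ q.length + 1) : IsSpaced m (graftTour p q) :=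
  ⟨fun _ hi _ hj ↦ hp.getVert_inj_graftTour hpr hq hqr hi hj,
    fun _ hi _ hj ↦ hp.not_swap_graftTour hq hm hi hj⟩

end Graft

end

/-- A finite tree together with a closed walk visiting all its vertices; trees are glued and toured
at the base point `root` of the walk. -/
structure TouredTree where
  Vertex : Type
  [fintype : Fintype Vertex]
  graph : SimpleGraph Vertex
  isTree : graph.IsTree
  root : Vertex
  tour : graph.Walk root root
  mem_support : ∀ v, v ∈ tour.support

namespace TouredTree

attribute [instance] fintype

/-- The tree with one vertex, toured by the walk of length `0`. -/
def single : TouredTree where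
  Vertex := Unit
  graph := ⊥
  isTree := .of_subsingleton
  root := ()
  tour := .nil
  mem_support := by simp

/-- Hang the tree `T` below the root of `S` by a new edge; the tour visits `T` after having
completed the tour of `S`. -/
def graft (S T : TouredTree) : TouredTree where
  Vertex := S.Vertex ⊕ T.Vertex
  graph := (S.graph ⊕g T.graph) ⊔ edge (.inl S.root) (.inr T.root)
  isTree := isTree_sum_sup_edge S.isTree T.isTree S.root T.root
  root := .inl S.root
  tour := graftTour S.tour T.tour
  mem_support := mem_support_graftTour S.mem_support T.mem_support

/-- The order of a toured tree. -/
abbrev card (S : TouredTree) : ℕ := Fintype.card S.Vertex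

/-- The star with three leaves, rooted at its center. -/
def star : TouredTree := ((single.graft single).graft single).graft single

/-- A path of `q + 1` vertices rooted at one end. Its other end carries three leaves and to every
other vertex is attached a `star`; the tour first runs to the far end of the path and visits the
stars on its way back. -/
def starComb : ℕ → TouredTree
  | 0 => star
  | q + 1 => (single.graft (starComb q)).graft star

/-- A `starComb` whose path is extended by two vertices beyond the root. -/
def stalkedStarComb (q : ℕ) : TouredTree := single.graft (single.graft (starComb q))

theorem card_graft (S T : TouredTree) : (S.graft T).card = S.card + T.card :=
  Fintype.card_sum

theorem card_single : single.card = 1 := rfl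

theorem length_tour_graft (S T : TouredTree) :
    (S.graft T).tour.length = S.tour.length + (T.tour.length + 2) :=
  length_graftTour S.tour T.tour

theorem length_tour_single : single.tour.length = 0 := rfl

theorem rootVisits_graft (S T : TouredTree) :
    rootVisits (S.graft T).tour = insert S.tour.length (rootVisits S.tour) :=
  rootVisits_graftTour S.tour T.tour

theorem rootVisits_single : rootVisits single.tour = ∅ := by
  simp [rootVisits, length_tour_single]

theorem length_tour_star : star.tour.length = 6 := rfl

theorem card_starComb (q : ℕ) : (starComb q).card = 5 * q + 4 := by
  induction q with
  | zero => rfl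
  | succ q ih => simp only [starComb, star, card_graft, card_single, ih]; omega

theorem length_tour_starComb (q : ℕ) : (starComb q).tour.length = 10 * q + 6 := by
  induction q with
  | zero => rfl
  | succ q ih =>
    simp only [starComb, length_tour_graft, length_tour_single, length_tour_star, ih]; omega

/-- The condition under which `graft` can take a tree as either argument: the tour is `m`-spaced
even if its final return to the root is counted as a visit. -/
structure IsGraftable (m : ℕ) (S : TouredTree) : Prop where
  isSpaced : IsSpaced m S.tour
  hasFreshReturn : HasFreshReturn m S.tour

theorem isGraftable_single (m : ℕ) : single.IsGraftable m :=
  ⟨isSpaced_nil, by simp [HasFreshReturn, rootVisits_single]⟩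

theorem IsGraftable.isSpaced_graft {m : ℕ} {S T : TouredTree} (hS : S.IsGraftable m)
    (hT : T.IsGraftable m) (hm : ¬m ∣ T.tour.length + 1) : IsSpaced m (S.graft T).tour :=
  isSpaced_graftTour hS.isSpaced hS.hasFreshReturn hT.isSpaced hT.hasFreshReturn hm

theorem IsGraftable.graft {m : ℕ} {S T : TouredTree} (hS : S.IsGraftable m)
    (hT : T.IsGraftable m) (hm : ¬m ∣ T.tour.length + 1)
    (hfresh : ∀ t ∈ insert S.tour.length (rootVisits S.tour),
      ¬t ≡ S.tour.length + (T.tour.length + 2) [MOD m]) : (S.graft T).IsGraftable m where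
  isSpaced := hS.isSpaced_graft hT hm
  hasFreshReturn := by rwa [HasFreshReturn, rootVisits_graft, length_tour_graft]

theorem IsGraftable.single_graft {m : ℕ} {T : TouredTree} (hT : T.IsGraftable m)
    (hm : ¬m ∣ T.tour.length + 1) (hm' : ¬m ∣ T.tour.length + 2) :
    (single.graft T).IsGraftable m := by
  refine (isGraftable_single m).graft hT hm ?_
  rw [rootVisits_single, length_tour_single]
  simpa [Nat.ModEq.comm, Nat.modEq_zero_iff_dvd] using hm'

theorem isGraftable_star : star.IsGraftable 5 := by
  have hleaf := isGraftable_single 5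
  refine ((hleaf.graft hleaf ?_ ?_).graft hleaf ?_ ?_).graft hleaf ?_ ?_ <;>
    simp [rootVisits_graft, rootVisits_single, length_tour_graft, length_tour_single, Nat.ModEq]

theorem isGraftable_starComb (q : ℕ) : (starComb q).IsGraftable 5 := by
  induction q with
  | zero => exact isGraftable_star
  | succ q ih =>
    have hpath : (single.graft (starComb q)).IsGraftable 5 :=
      ih.single_graft (by rw [length_tour_starComb]; omega) (by rw [length_tour_starComb]; omega)
    refine hpath.graft isGraftable_star (by decide) ?_
    simp only [rootVisits_graft, rootVisits_single, length_tour_graft, length_tour_single,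
      length_tour_starComb, length_tour_star, Set.mem_insert_iff, Set.mem_empty_iff_false, or_false,
      Nat.ModEq]
    omega

theorem card_stalkedStarComb (q : ℕ) : (stalkedStarComb q).card = 5 * q + 6 := by
  simp only [stalkedStarComb, card_graft, card_single, card_starComb]; omega

theorem length_tour_stalkedStarComb (q : ℕ) :
    (stalkedStarComb q).tour.length = 5 * (2 * q + 2) := by
  simp only [stalkedStarComb, length_tour_graft, length_tour_single, length_tour_starComb]; omega

theorem isSpaced_tour_stalkedStarComb (q : ℕ) : IsSpaced 5 (stalkedStarComb q).tour := by
  have hstalk : (single.graft (starComb q)).IsGraftable 5 := (isGraftable_starComb q).single_graft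
    (by rw [length_tour_starComb]; omega) (by rw [length_tour_starComb]; omega)
  refine (isGraftable_single 5).isSpaced_graft hstalk ?_
  rw [length_tour_graft, length_tour_single, length_tour_starComb]
  omega

end TouredTree

/-- for every positive integer `q` there is a tree on `n = 5q + 6`
vertices admitting a feasible agency without parking with time horizon
`T = 2n - 2 = 10q + 10` and `k = 2q + 2 = T/5` agents. -/
theorem stmt8 (q : ℕ) (hq : 0 < q) :
    ∃ G : SimpleGraph (Fin (5 * q + 6)), G.IsTree ∧
      ∃ a : Fin (2 * q + 2) → ℕ → Fin (5 * q + 6),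
        FeasibleAgencyNP G (2 * q + 2) (10 * q + 10) a := by
  let S := TouredTree.stalkedStarComb q
  have hcard : Fintype.card S.Vertex = 5 * q + 6 := TouredTree.card_stalkedStarComb q
  have hlength : S.tour.length = 5 * (2 * q + 2) := TouredTree.length_tour_stalkedStarComb q
  have hfeasible := feasibleAgencyNP_delayedAgents (by decide) hlength
    (TouredTree.isSpaced_tour_stalkedStarComb q) S.mem_support
  have hT : S.tour.length = 10 * q + 10 := by omega
  rw [hT] at hfeasible
  exact ⟨S.graph.overFin hcard, (S.graph.overFinIso hcard).isTree_iff.1 S.isTree, _,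
    hfeasible.map_iso (S.graph.overFinIso hcard)⟩
end

section
/- Let G be a finite simple graph on n ≥ 3 vertices. There exists a feasible agency without parking in G with k = n agents and some time horizon T if and only if the spanning subgraph of G whose edge set consists of all edges of G that are contained in some 2-factor of G is connected. -/
open SimpleGraph

/-- A 2-factor of `G`: a spanning subgraph (given as a simple graph `H ≤ G`) in
which every vertex has degree exactly 2. -/
def IsTwoFactor {V : Type*} (G H : SimpleGraph V) : Prop :=
  H ≤ G ∧ ∀ v : V, (H.neighborSet v).ncard = 2

/-!
When `n` agents occupy all `n` vertices, one time step of a feasible agency without parking is a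
permutation `σ` of the vertices along edges with `σ (σ v) ≠ v` everywhere. The edges `v — σ v` of
such a permutation form a 2-factor, and conversely orienting the cycles of a 2-factor gives such a
permutation. Hence every agent only uses edges lying in 2-factors, and since it visits all vertices
these edges connect the graph. Conversely, if they connect the graph, then moving all agents around
2-factors can bring any given agent to any given vertex. All steps being reversible, the
placements reachable from an initial one are the vertices of a connected graph, and a closed walk
through all of them is an agency.
-/

section Permutations

variable {α β : Type*}

lemma exists_perm_apply_eq_of_preserves_fibers (f : α → β) (τ : β → Equiv.Perm α)
    (hτ : ∀ b x, f (τ b x) = b ↔ f x = b) :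
    ∃ σ : Equiv.Perm α, ∀ x, σ x = τ (f x) x :=
  ⟨(Equiv.sigmaFiberEquiv f).permCongr
    (Equiv.Perm.sigmaCongrRight fun b => (τ b).subtypePerm (hτ b)), fun _ => rfl⟩

lemma formPerm_formPerm_ne_of_three_le_length [DecidableEq α] {l : List α} (hl : l.Nodup)
    (hlen : 3 ≤ l.length) {x : α} (hx : x ∈ l) : l.formPerm (l.formPerm x) ≠ x := by
  obtain ⟨i, hi, rfl⟩ := List.getElem_of_mem hx
  rw [← Equiv.Perm.mul_apply, ← sq, List.formPerm_pow_apply_getElem l hl, Ne, hl.getElem_inj_iff]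
  intro h
  rcases lt_or_ge (i + 2) l.length with hlt | hge
  · rw [Nat.mod_eq_of_lt hlt] at h
    lia
  · rw [Nat.mod_eq_sub_mod hge, Nat.mod_eq_of_lt (by lia)] at h
    lia

end Permutations

section ClosedWalks

variable {V : Type*} {G : SimpleGraph V} {u v : V}

lemma exists_closed_walk_forall_mem_support {s : Set V} (hs : s.Finite)
    (hreach : ∀ v ∈ s, G.Reachable u v) : ∃ w : G.Walk u u, ∀ v ∈ s, v ∈ w.support := by
  induction s, hs using Set.Finite.induction_on with
  | empty => exact ⟨Walk.nil, by simp⟩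
  | @insert v s _ _ ih =>
    obtain ⟨w, hw⟩ := ih fun x hx => hreach x (Set.mem_insert_of_mem v hx)
    obtain ⟨q⟩ := hreach v (Set.mem_insert v s)
    refine ⟨w.append (q.append q.reverse), fun x hx => ?_⟩
    simp only [Walk.mem_support_append_iff]
    rcases hx with rfl | hx
    · exact .inr (.inl q.end_mem_support)
    · exact .inl (hw x hx)

lemma adj_formPerm_tail_support [DecidableEq V] {p : G.Walk v v} (hp : p.support.tail.Nodup)
    (hu : u ∈ p.support.tail) : G.Adj u (p.support.tail.formPerm u) := by
  have hlen : p.support.tail.length = p.length := by simp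
  have getElem_eq (i : ℕ) (hi : i < p.support.tail.length) :
      p.support.tail[i] = p.getVert (i + 1) := by
    rw [List.getElem_tail, Walk.support_getElem_eq_getVert]
  obtain ⟨i, hi, rfl⟩ := List.getElem_of_mem hu
  rw [List.formPerm_apply_getElem _ hp, getElem_eq, getElem_eq]
  rcases (show i + 1 ≤ p.length by lia).lt_or_eq with hlt | heq
  · simpa only [hlen, Nat.mod_eq_of_lt hlt] using p.adj_getVert_succ hlt
  · simpa only [hlen, heq, Nat.mod_self, Walk.getVert_length, Walk.getVert_zero]
      using p.adj_getVert_succ (show 0 < p.length by lia)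

end ClosedWalks

/-- One time step of `n` agents occupying all `n` vertices, as the permutation sending each
vertex to the next position of the agent standing there: every agent moves along an edge of `G`,
and no two agents swap places. -/
structure IsSwapFreeMove {V : Type*} (G : SimpleGraph V) (σ : Equiv.Perm V) : Prop where
  adj : ∀ v, G.Adj v (σ v)
  apply_apply_ne : ∀ v, σ (σ v) ≠ v

/-- The spanning subgraph of the edges of `G` that lie in some 2-factor of `G`. -/
def twoFactorGraph {V : Type*} (G : SimpleGraph V) : SimpleGraph V :=
  SimpleGraph.fromEdgeSet {e : Sym2 V | ∃ H : SimpleGraph V, IsTwoFactor G H ∧ e ∈ H.edgeSet}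

/-- The configuration graph of agents indexed by `ι`: its vertices are the placements of the
agents on pairwise distinct vertices of `G`, its edges the joint steps without parking in which no
two agents swap places. -/
def configGraph {V : Type*} (G : SimpleGraph V) (ι : Type*) [Nonempty ι] :
    SimpleGraph (ι ↪ V) where
  Adj p q := (∀ i, G.Adj (p i) (q i)) ∧ ∀ i j, p i = q j → q i ≠ p j
  symm := ⟨fun _ _ h => ⟨fun i => (h.1 i).symm, fun i j hqp hpq => h.2 i j hpq hqp⟩⟩
  loopless := ⟨fun _ h => (h.1 (Classical.arbitrary ι)).ne rfl⟩

section TwoFactors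

variable {V : Type*} {G H : SimpleGraph V} {σ : Equiv.Perm V} {u v : V}

lemma twoFactorGraph_adj :
    (twoFactorGraph G).Adj u v ↔ ∃ H, IsTwoFactor G H ∧ H.Adj u v := by
  simp only [twoFactorGraph, fromEdgeSet_adj, Set.mem_ofPred_eq, mem_edgeSet, and_iff_left_iff_imp]
  rintro ⟨H, -, huv⟩
  exact huv.ne

namespace IsSwapFreeMove

lemma mono (hσ : IsSwapFreeMove H σ) (hle : H ≤ G) : IsSwapFreeMove G σ :=
  ⟨fun v => hle (hσ.adj v), hσ.apply_apply_ne⟩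

lemma adj_inv (hσ : IsSwapFreeMove G σ) (v : V) : G.Adj v (σ⁻¹ v) := by
  simpa using (hσ.adj (σ⁻¹ v)).symm

lemma apply_ne_inv_apply (hσ : IsSwapFreeMove G σ) (v : V) : σ v ≠ σ⁻¹ v := by
  rw [Ne, Equiv.Perm.eq_inv_iff_eq]
  exact hσ.apply_apply_ne v

lemma inv (hσ : IsSwapFreeMove G σ) : IsSwapFreeMove G σ⁻¹ where
  adj := hσ.adj_inv
  apply_apply_ne v h := hσ.apply_ne_inv_apply v (Equiv.Perm.inv_eq_iff_eq.1 h).symm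

lemma twoFactorGraph_adj_apply (hσ : IsSwapFreeMove G σ) (v : V) :
    (twoFactorGraph G).Adj v (σ v) := by
  let H := SimpleGraph.fromRel fun x y => σ x = y
  have neighborSet_eq (x : V) : H.neighborSet x = {σ x, σ⁻¹ x} := by
    ext y
    have hne : σ y = x ∨ σ x = y → x ≠ y := by
      rintro (rfl | rfl)
      exacts [(hσ.adj y).ne', (hσ.adj x).ne]
    simp only [H, mem_neighborSet, fromRel_adj, Set.mem_insert_iff, Set.mem_singleton_iff,
      Equiv.Perm.eq_inv_iff_eq]
    grind
  refine twoFactorGraph_adj.2 ⟨H, ⟨fun x y hxy => ?_, fun x => ?_⟩, ?_⟩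
  · rcases (fromRel_adj _ x y).1 hxy with ⟨-, rfl | rfl⟩
    exacts [hσ.adj x, (hσ.adj y).symm]
  · rw [neighborSet_eq, Set.ncard_pair (hσ.apply_ne_inv_apply x)]
  · exact (fromRel_adj _ v (σ v)).2 ⟨(hσ.adj v).ne, .inl rfl⟩

end IsSwapFreeMove

lemma exists_perm_orienting_connectedComponent [Finite V] (hH : H.IsCycles)
    (c : H.ConnectedComponent) (hv : v ∈ c.supp) (hne : (H.neighborSet v).Nonempty) :
    ∃ τ : Equiv.Perm V, (∀ u, τ u ∈ c.supp ↔ u ∈ c.supp) ∧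
      ∀ u ∈ c.supp, H.Adj u (τ u) ∧ τ (τ u) ≠ u := by
  classical
  obtain ⟨p, hp, hverts⟩ := hH.exists_cycle_toSubgraph_verts_eq_connectedComponentSupp hv hne
  have mem_supp_iff (u : V) : u ∈ c.supp ↔ u ∈ p.support.tail := by
    rw [← hverts, Walk.mem_verts_toSubgraph, Walk.mem_support_iff, or_iff_right_of_imp]
    rintro rfl
    exact Walk.end_mem_tail_support hp.not_nil
  refine ⟨p.support.tail.formPerm, fun u => ?_, fun u hu => ⟨?_, ?_⟩⟩
  · rw [mem_supp_iff, mem_supp_iff, List.formPerm_mem_iff_mem]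
  · exact adj_formPerm_tail_support hp.support_nodup ((mem_supp_iff u).1 hu)
  · exact formPerm_formPerm_ne_of_three_le_length hp.support_nodup
      (by simpa using hp.three_le_length) ((mem_supp_iff u).1 hu)

lemma exists_isSwapFreeMove_of_ncard_neighborSet [Finite V]
    (hH : ∀ v, (H.neighborSet v).ncard = 2) : ∃ σ, IsSwapFreeMove H σ := by
  have exists_orienting (c : H.ConnectedComponent) : ∃ τ : Equiv.Perm V,
      (∀ u, τ u ∈ c.supp ↔ u ∈ c.supp) ∧ ∀ u ∈ c.supp, H.Adj u (τ u) ∧ τ (τ u) ≠ u := by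
    obtain ⟨v, hv⟩ := c.nonempty_supp
    exact exists_perm_orienting_connectedComponent (fun v _ => hH v) c hv
      (Set.nonempty_of_ncard_ne_zero (by rw [hH]; decide))
  choose τ mem_supp_iff hτ using exists_orienting
  obtain ⟨σ, hσ⟩ := exists_perm_apply_eq_of_preserves_fibers H.connectedComponentMk τ mem_supp_iff
  refine ⟨σ, fun v => ?_, fun v => ?_⟩
  · rw [hσ]
    exact (hτ _ v rfl).1
  · have hcomp : H.connectedComponentMk (τ (H.connectedComponentMk v) v)
        = H.connectedComponentMk v := (mem_supp_iff _ v).2 rfl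
    rw [hσ v, hσ, hcomp]
    exact (hτ _ v rfl).2

lemma twoFactorGraph_adj_iff_exists_isSwapFreeMove [Finite V] :
    (twoFactorGraph G).Adj u v ↔ ∃ σ, IsSwapFreeMove G σ ∧ σ u = v := by
  refine ⟨fun huv => ?_, fun ⟨σ, hσ, huv⟩ => huv ▸ hσ.twoFactorGraph_adj_apply u⟩
  obtain ⟨H, ⟨hle, hH⟩, huv⟩ := twoFactorGraph_adj.1 huv
  obtain ⟨σ, hσ⟩ := exists_isSwapFreeMove_of_ncard_neighborSet hH
  have neighborSet_eq : {σ u, σ⁻¹ u} = H.neighborSet u :=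
    Set.eq_of_subset_of_ncard_le (Set.pair_subset (hσ.adj u) (hσ.adj_inv u))
      (by rw [hH, Set.ncard_pair (hσ.apply_ne_inv_apply u)]) (Set.toFinite _)
  obtain h | h : v ∈ ({σ u, σ⁻¹ u} : Set V) := neighborSet_eq ▸ huv
  · exact ⟨σ, hσ.mono hle, h.symm⟩
  · exact ⟨σ⁻¹, hσ.inv.mono hle, h.symm⟩

end TwoFactors

section AgenciesToConnectivity

variable {V : Type*} {G : SimpleGraph V} {T : ℕ}

lemma AgencyTourNP.connected {a : ℕ → V} (ha : AgencyTourNP G T a) : G.Connected := by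
  obtain ⟨hadj, hvisit, -⟩ := ha
  have hreach (t : ℕ) (ht : t ≤ T) : G.Reachable (a 0) (a t) := by
    induction t with
    | zero => rfl
    | succ t ih => exact (ih (by lia)).trans (hadj t ht).reachable
  refine connected_iff_exists_forall_reachable G |>.2 ⟨a 0, fun v => ?_⟩
  obtain ⟨t, ht, rfl⟩ := hvisit v
  exact hreach t ht

namespace FeasibleAgencyNP

lemma position_injective {k : ℕ} {a : Fin k → ℕ → V} (ha : FeasibleAgencyNP G k T a) {t : ℕ}
    (ht : t ≤ T) : Function.Injective fun i => a i t := by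
  intro i j hij
  by_contra hne
  exact (ha.2 i j hne).1 t ht hij

variable [Fintype V] {a : Fin (Fintype.card V) → ℕ → V}

lemma position_bijective (ha : FeasibleAgencyNP G (Fintype.card V) T a) {t : ℕ} (ht : t ≤ T) :
    Function.Bijective fun i => a i t :=
  (Fintype.bijective_iff_injective_and_card _).2 ⟨ha.position_injective ht, Fintype.card_fin _⟩

lemma exists_isSwapFreeMove (ha : FeasibleAgencyNP G (Fintype.card V) T a) {t : ℕ} (ht : t < T) :
    ∃ σ, IsSwapFreeMove G σ ∧ ∀ i, σ (a i t) = a i (t + 1) := by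
  let p := Equiv.ofBijective _ (ha.position_bijective ht.le)
  let q := Equiv.ofBijective _ (ha.position_bijective (t := t + 1) ht)
  have apply_position (i : Fin (Fintype.card V)) : (p.symm.trans q) (a i t) = a i (t + 1) :=
    congrArg q (p.symm_apply_apply i)
  have hadj (i : Fin (Fintype.card V)) : G.Adj (a i t) (a i (t + 1)) := (ha.1 i).1 t ht
  refine ⟨p.symm.trans q, ⟨fun v => ?_, fun v hswap => ?_⟩, apply_position⟩
  · obtain ⟨i, rfl⟩ := p.surjective v
    exact (apply_position i).symm ▸ hadj i
  · obtain ⟨i, rfl : a i t = v⟩ := p.surjective v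
    obtain ⟨j, hj : a j t = a i (t + 1)⟩ := p.surjective (a i (t + 1))
    have hij : i ≠ j := by
      rintro rfl
      exact (hadj i).ne hj
    rw [apply_position, ← hj, apply_position] at hswap
    exact (ha.2 i j hij).2 t ht ⟨hswap.symm, hj.symm, (hadj i).ne⟩

lemma agencyTourNP_twoFactorGraph (ha : FeasibleAgencyNP G (Fintype.card V) T a)
    (i : Fin (Fintype.card V)) : AgencyTourNP (twoFactorGraph G) T (a i) := by
  refine ⟨fun t ht => ?_, (ha.1 i).2⟩
  obtain ⟨σ, hσ, apply_position⟩ := ha.exists_isSwapFreeMove ht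
  exact apply_position i ▸ hσ.twoFactorGraph_adj_apply (a i t)

end FeasibleAgencyNP

end AgenciesToConnectivity

section ConnectivityToAgencies

variable {V : Type*} {G : SimpleGraph V}

lemma feasibleAgencyNP_of_closed_walk {k : ℕ} [NeZero k] {p : Fin k ↪ V}
    (w : (configGraph G (Fin k)).Walk p p) (hw : ∀ i v, ∃ q ∈ w.support, q i = v) :
    FeasibleAgencyNP G k w.length fun i t => w.getVert t i := by
  refine ⟨fun i => ⟨fun t ht => (w.adj_getVert_succ ht).1 i, fun v => ?_, by simp⟩,
    fun i j hij => ⟨fun t _ => (w.getVert t).injective.ne hij, fun t ht ⟨hpq, hqp, _⟩ =>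
      (w.adj_getVert_succ ht).2 i j hpq hqp⟩⟩
  obtain ⟨q, hq, rfl⟩ := hw i v
  obtain ⟨t, rfl, ht⟩ := Walk.mem_support_iff_exists_getVert.1 hq
  exact ⟨t, ht, rfl⟩

variable {ι : Type*} [Nonempty ι]

lemma IsSwapFreeMove.configGraph_adj_trans {σ : Equiv.Perm V} (hσ : IsSwapFreeMove G σ)
    (p : ι ↪ V) : (configGraph G ι).Adj p (p.trans σ.toEmbedding) :=
  ⟨fun i => hσ.adj (p i), fun i j (hi : p i = σ (p j)) (hj : σ (p i) = p j) =>
    hσ.apply_apply_ne (p i) (hj ▸ hi.symm)⟩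

lemma exists_reachable_configGraph_apply_eq [Finite V] {p : ι ↪ V} {i : ι} {v : V}
    (hreach : (twoFactorGraph G).Reachable (p i) v) :
    ∃ q, (configGraph G ι).Reachable p q ∧ q i = v := by
  rw [reachable_iff_reflTransGen] at hreach
  induction hreach with
  | refl => exact ⟨p, .rfl, rfl⟩
  | tail _ huv ih =>
    obtain ⟨q, hpq, rfl⟩ := ih
    obtain ⟨σ, hσ, rfl⟩ := twoFactorGraph_adj_iff_exists_isSwapFreeMove.1 huv
    exact ⟨q.trans σ.toEmbedding, hpq.trans (hσ.configGraph_adj_trans q).reachable, rfl⟩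

theorem exists_feasibleAgencyNP_of_connected_twoFactorGraph [Finite V]
    (hconn : (twoFactorGraph G).Connected) {k : ℕ} [NeZero k] (p : Fin k ↪ V) :
    ∃ T a, FeasibleAgencyNP G k T a := by
  obtain ⟨w, hw⟩ := exists_closed_walk_forall_mem_support
    (Set.toFinite {q | (configGraph G (Fin k)).Reachable p q}) fun _ hq => hq
  refine ⟨w.length, _, feasibleAgencyNP_of_closed_walk w fun i v => ?_⟩
  obtain ⟨q, hpq, hqv⟩ := exists_reachable_configGraph_apply_eq (hconn.preconnected (p i) v)
  exact ⟨q, hw q hpq, hqv⟩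

end ConnectivityToAgencies

/-- a graph on `n ≥ 3` vertices admits a feasible agency without
parking with `k = n` agents and some time horizon `T` iff the spanning subgraph
whose edges are the edges of `G` lying in some 2-factor of `G` is connected. -/
theorem stmt11 {V : Type*} [Fintype V] (G : SimpleGraph V)
    (hn : 3 ≤ Fintype.card V) :
    (∃ T : ℕ, ∃ a : Fin (Fintype.card V) → ℕ → V,
        FeasibleAgencyNP G (Fintype.card V) T a) ↔
      (SimpleGraph.fromEdgeSet
        {e : Sym2 V | ∃ H : SimpleGraph V, IsTwoFactor G H ∧ e ∈ H.edgeSet}).Connected := by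
  have : NeZero (Fintype.card V) := ⟨by lia⟩
  constructor
  · rintro ⟨T, a, ha⟩
    exact (ha.agencyTourNP_twoFactorGraph 0).connected
  · intro hconn
    exact exists_feasibleAgencyNP_of_connected_twoFactorGraph hconn
      (Fintype.equivFin V).symm.toEmbedding
end
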